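/- arXiv:2206.10389 — 9 statements merged into one kernel-verified Lean document; each statement's English description precedes it below -/
import Mathlib

section
/- Let φ be an exact 2CNF Boolean formula in a clean shape with distinct variables x₁,…,xₙ and clauses c₁,…,c_m, in which every variable occurs at most 3 times and no literal is removable. If φ is satisfiable, then the graph G_φ has a 2-checkered vertex cover. -/
/-- Vertices of the graph `G_φ`: `Sum.inl (i, true)` is the literal vertex `u_i^{(1)}`
(for the positive literal `x_i`), `Sum.inl (i, false)` is `u_i^{(2)}` (for `¬x_i`),
and `Sum.inr (j, l)` is the clause-position vertex `c_j[l]` (positions indexed by `Bool`). -/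
abbrev CVCVertex (n m : ℕ) := (Fin n × Bool) ⊕ (Fin m × Bool)

/-- The graph `G_φ` built from an exact 2CNF formula `φ` whose clause `j` has the two
literals `ltr j false` and `ltr j true`, a literal being a pair (variable, polarity). -/
def Gphi {n m : ℕ} (ltr : Fin m → Bool → Fin n × Bool) : SimpleGraph (CVCVertex n m) :=
  SimpleGraph.fromRel (fun a b =>
    match a, b with
    | Sum.inl (i, _), Sum.inl (i', _) => i = i'
    | Sum.inr (j, _), Sum.inr (j', _) => j = j'
    | Sum.inl (i, pol), Sum.inr (j, l) => ltr j l = (i, pol)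
    | Sum.inr (j, l), Sum.inl (i, pol) => ltr j l = (i, pol))

theorem stmt_6 {n m : ℕ} (ltr : Fin m → Bool → Fin n × Bool)
    (hclean : ∀ j, (ltr j false).1 ≠ (ltr j true).1)
    (hocc : ∀ i : Fin n,
      (Finset.univ.filter (fun p : Fin m × Bool => (ltr p.1 p.2).1 = i)).card ≤ 3)
    (hnorem : ∀ (i : Fin n) (b : Bool),
      (∃ j l, ltr j l = (i, b)) → ∃ j l, ltr j l = (i, !b))
    (σ : Fin n → Bool) (hσ : ∀ j, ∃ p, σ (ltr j p).1 = (ltr j p).2) :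
    ∃ S : Set (CVCVertex n m),
      (∀ a b, (Gphi ltr).Adj a b → a ∈ S ∨ b ∈ S) ∧
      (∀ a b, (Gphi ltr).Adj a b → a ∈ S → b ∈ S →
        ((Gphi ltr).neighborSet a).ncard ≤ 2 ∧ ((Gphi ltr).neighborSet b).ncard ≤ 2) := by
  have hdeg : ∀ (j : Fin m) (l : Bool),
      ((Gphi ltr).neighborSet (Sum.inr (j, l))).ncard ≤ 2 := by
    intro j l
    have hsub : (Gphi ltr).neighborSet (Sum.inr (j, l)) ⊆
        ({Sum.inr (j, !l), Sum.inl (ltr j l)} : Set (CVCVertex n m)) := by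
      rintro (⟨i, b⟩ | ⟨j', l'⟩) h
      · simp [Gphi] at h
        simp [h]
      · simp [Gphi] at h
        obtain ⟨h1, h2⟩ := h
        have hj : j = j' := by rcases h2 with h2 | h2 <;> simp [h2]
        subst hj
        cases l <;> cases l' <;> simp_all
    exact (Set.ncard_le_ncard hsub (Set.toFinite _)).trans (by
      refine (Set.ncard_insert_le _ _).trans ?_
      simp)
  refine ⟨{a | match a with
    | Sum.inl (i, b) => σ i ≠ b
    | Sum.inr (j, l) => σ (ltr j l).1 = (ltr j l).2}, ?_, ?_⟩
  · rintro (⟨i, b⟩ | ⟨j, l⟩) (⟨i', b'⟩ | ⟨j', l'⟩) h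
    · simp [Gphi] at h
      grind
    · simp [Gphi] at h
      simp [h]
      grind
    · simp [Gphi] at h
      simp [h]
      grind
    · simp [Gphi] at h
      obtain ⟨h1, h2⟩ := h
      have hj : j = j' := by rcases h2 with h2 | h2 <;> simp [h2]
      subst hj
      obtain ⟨p, hp⟩ := hσ j
      cases l <;> cases l' <;> cases p <;> simp_all
  · rintro (⟨i, b⟩ | ⟨j, l⟩) (⟨i', b'⟩ | ⟨j', l'⟩) h ha hb
    · exfalso
      simp [Gphi] at h
      obtain ⟨h1, h2⟩ := h
      have hi : i = i' := by rcases h2 with h2 | h2 <;> simp [h2]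
      subst hi
      simp at ha hb h1
      cases b <;> cases b' <;> simp_all
    · exfalso
      simp [Gphi] at h
      simp [h] at ha hb
      grind
    · exfalso
      simp [Gphi] at h
      simp [h] at ha hb
      grind
    · exact ⟨hdeg _ _, hdeg _ _⟩
end

section
/- Let X = {u₁,…,uₙ} be a finite set, let R ⊆ X, and let C₁,…,C_m be subsets of X such that every element of X belongs to exactly two of the sets C_j (counting indices j). Define the n × m matrix A by A_{ij} = 1 if u_i ∈ C_j and A_{ij} = 0 otherwise, and define b, b' ∈ ℚ^n by b_i = b'_i = 1 if u_i ∉ R and b_i = 0, b'_i = 1 if u_i ∈ R. Then for every set of indices D ⊆ [m], the indexed family (C_j)_{j ∈ D} is an exact cover for X exempt from R if and only if the indicator vector x_D ∈ {0,1}^m (with (x_D)_j = 1 iff j ∈ D) satisfies b ≤ A·x_D ≤ b' componentwise. Consequently, there exists D ⊆ [m] such that (C_j)_{j ∈ D} is an exact cover for X exempt from R if and only if there exists x ∈ {0,1}^m with b ≤ Ax ≤ b' componentwise. -/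
theorem stmt_9 {n m : ℕ} (C : Fin m → Finset (Fin n)) (R : Finset (Fin n))
    (hover : ∀ i : Fin n, (Finset.univ.filter (fun j => i ∈ C j)).card = 2)
    (A : Matrix (Fin n) (Fin m) ℚ)
    (hA : ∀ i j, A i j = if i ∈ C j then 1 else 0)
    (b b' : Fin n → ℚ)
    (hb : ∀ i, b i = if i ∈ R then 0 else 1)
    (hb' : ∀ i, b' i = 1) :
    (∀ D : Finset (Fin m),
      ((∀ i : Fin n, i ∉ R → ∃! j, j ∈ D ∧ i ∈ C j) ∧
       (∀ i ∈ R, ∀ j₁ ∈ D, ∀ j₂ ∈ D, i ∈ C j₁ → i ∈ C j₂ → j₁ = j₂)) ↔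
      (∀ i, b i ≤ A.mulVec (fun j => if j ∈ D then 1 else 0) i ∧
        A.mulVec (fun j => if j ∈ D then 1 else 0) i ≤ b' i)) ∧
    ((∃ D : Finset (Fin m),
      (∀ i : Fin n, i ∉ R → ∃! j, j ∈ D ∧ i ∈ C j) ∧
      (∀ i ∈ R, ∀ j₁ ∈ D, ∀ j₂ ∈ D, i ∈ C j₁ → i ∈ C j₂ → j₁ = j₂)) ↔
     (∃ x : Fin m → ℚ, (∀ j, x j = 0 ∨ x j = 1) ∧
       ∀ i, b i ≤ A.mulVec x i ∧ A.mulVec x i ≤ b' i)) := by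
  have key : ∀ (D : Finset (Fin m)) (i : Fin n),
      A.mulVec (fun j => if j ∈ D then 1 else 0) i = ((D.filter (fun j => i ∈ C j)).card : ℚ) := by
    intro D i
    simp only [Matrix.mulVec, dotProduct, hA, mul_ite, mul_one, mul_zero]
    rw [Finset.sum_ite_mem, Finset.univ_inter, Finset.sum_boole]
  have main : ∀ D : Finset (Fin m),
      ((∀ i : Fin n, i ∉ R → ∃! j, j ∈ D ∧ i ∈ C j) ∧
       (∀ i ∈ R, ∀ j₁ ∈ D, ∀ j₂ ∈ D, i ∈ C j₁ → i ∈ C j₂ → j₁ = j₂)) ↔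
      (∀ i, b i ≤ A.mulVec (fun j => if j ∈ D then 1 else 0) i ∧
        A.mulVec (fun j => if j ∈ D then 1 else 0) i ≤ b' i) := by
    intro D
    have h1 : ∀ i, (∃! j, j ∈ D ∧ i ∈ C j) ↔ (D.filter (fun j => i ∈ C j)).card = 1 := by
      intro i
      rw [Finset.card_eq_one, Finset.singleton_iff_unique_mem]
      simp only [Finset.mem_filter]
    have h2 : ∀ i, (∀ j₁ ∈ D, ∀ j₂ ∈ D, i ∈ C j₁ → i ∈ C j₂ → j₁ = j₂) ↔
        (D.filter (fun j => i ∈ C j)).card ≤ 1 := by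
      intro i
      rw [Finset.card_le_one]
      simp only [Finset.mem_filter]
      exact ⟨fun h a ha c hc => h a ha.1 c hc.1 ha.2 hc.2,
        fun h a ha c hc h3 h4 => h a ⟨ha, h3⟩ c ⟨hc, h4⟩⟩
    simp only [key, hb, hb', h1, h2]
    constructor
    · rintro ⟨ha, hc⟩ i
      by_cases hi : i ∈ R
      · simpa [hi] using hc i hi
      · simp [hi, ha i hi]
    · intro h
      refine ⟨fun i hi => ?_, fun i hi => ?_⟩
      · have := h i
        simp only [hi, if_false] at this
        exact_mod_cast le_antisymm this.2 this.1
      · exact_mod_cast (h i).2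
  refine ⟨main, ?_, ?_⟩
  · rintro ⟨D, hD⟩
    refine ⟨_, fun j => ?_, (main D).1 hD⟩
    by_cases hj : j ∈ D <;> simp [hj]
  · rintro ⟨x, hx, h⟩
    refine ⟨Finset.univ.filter (fun j => x j = 1), (main _).2 ?_⟩
    have e : (fun j => if j ∈ Finset.univ.filter (fun j => x j = 1) then (1:ℚ) else 0) = x := by
      funext j
      rcases hx j with h0 | h0 <;> simp [h0]
    rw [e]
    exact h
end

section
/- Let φ be an exact 2CNF Boolean formula in a clean shape with distinct variables x₁,…,xₙ and clauses C₁,…,C_m, in which every variable occurs at most 3 times and no literal is removable. Then φ is satisfiable if and only if there exists a subcollection D' ⊆ D that is an exact cover for X exempt from R, where X, R and D are as defined in the construction below. -/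
/-- The abstract elements used in the reduction from 2SAT₃ to 3XCE₂:
`lit i b j` is the element `z[j]` for the literal `z` with variable `x_i` and polarity `b`
occurring in clause `C_j`; `s j` is the element `s_j`; `t i false` is `t_i[1]` and
`t i true` is `t_i[2]`. -/
inductive XCElem (n m : ℕ) where
  | lit : Fin n → Bool → Fin m → XCElem n m
  | s : Fin m → XCElem n m
  | t : Fin n → Bool → XCElem n m

/-- The three classes of variables: `plus` is `V⁺`, `minus` is `V⁻`, `star` is `V*`. -/
inductive XCClass where
  | plus | minus | star

/-- The literal `(i, b)` occurs in clause `j` of the formula whose clause `j` consists of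
the two literals `ltr j false` and `ltr j true`. -/
def OccursIn {n m : ℕ} (ltr : Fin m → Bool → Fin n × Bool)
    (i : Fin n) (b : Bool) (j : Fin m) : Prop :=
  ∃ p, ltr j p = (i, b)

/-- The universe `X = X₁ ∪ X₂ ∪ X₃` of the construction. -/
def coverX {n m : ℕ} (ltr : Fin m → Bool → Fin n × Bool) (cls : Fin n → XCClass) :
    Set (XCElem n m) :=
  {e | ∃ i b j, OccursIn ltr i b j ∧ e = XCElem.lit i b j} ∪
  {e | ∃ j, e = XCElem.s j} ∪
  {e | ∃ i, e = XCElem.t i false} ∪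
  {e | ∃ i, cls i ≠ XCClass.star ∧ e = XCElem.t i true}

/-- The exemption set `R = X₁`. -/
def coverR {n m : ℕ} (ltr : Fin m → Bool → Fin n × Bool) : Set (XCElem n m) :=
  {e | ∃ i b j, OccursIn ltr i b j ∧ e = XCElem.lit i b j}

/-- The collection `D` of subsets of `X` of the construction. -/
def coverD {n m : ℕ} (ltr : Fin m → Bool → Fin n × Bool) (cls : Fin n → XCClass)
    (j₁ j₂ j₃ : Fin n → Fin m) : Set (Set (XCElem n m)) :=
  {S | ∃ i b j, OccursIn ltr i b j ∧ S = {XCElem.lit i b j, XCElem.s j}} ∪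
  {S | ∃ i, cls i = XCClass.plus ∧
      (S = {XCElem.lit i true (j₁ i), XCElem.t i false} ∨
       S = {XCElem.lit i true (j₂ i), XCElem.t i true} ∨
       S = {XCElem.lit i false (j₃ i), XCElem.t i false, XCElem.t i true})} ∪
  {S | ∃ i, cls i = XCClass.minus ∧
      (S = {XCElem.lit i false (j₁ i), XCElem.t i false} ∨
       S = {XCElem.lit i false (j₂ i), XCElem.t i true} ∨
       S = {XCElem.lit i true (j₃ i), XCElem.t i false, XCElem.t i true})} ∪
  {S | ∃ i, cls i = XCClass.star ∧
      (S = {XCElem.lit i true (j₁ i), XCElem.t i false} ∨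
       S = {XCElem.lit i false (j₂ i), XCElem.t i false})}

def JJ {n m : ℕ} (cls : Fin n → XCClass) (j₁ j₂ j₃ : Fin n → Fin m)
    (i : Fin n) (b c : Bool) : Fin m :=
  match cls i, b, c with
  | .plus, true, false => j₁ i
  | .plus, true, true => j₂ i
  | .plus, false, _ => j₃ i
  | .minus, false, false => j₁ i
  | .minus, false, true => j₂ i
  | .minus, true, _ => j₃ i
  | .star, true, _ => j₁ i
  | .star, false, _ => j₂ i

def VV {n : ℕ} (cls : Fin n → XCClass) (i : Fin n) (c : Bool) : Prop :=
  c = false ∨ cls i ≠ XCClass.star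

def Sset {n m : ℕ} (i : Fin n) (b : Bool) (j : Fin m) : Set (XCElem n m) :=
  {XCElem.lit i b j, XCElem.s j}

def Tset {n m : ℕ} (V : Fin n → Bool → Prop) (J : Fin n → Bool → Bool → Fin m)
    (i : Fin n) (b : Bool) (j : Fin m) : Set (XCElem n m) :=
  {e | e = XCElem.lit i b j ∨ ∃ c, V i c ∧ J i b c = j ∧ e = XCElem.t i c}

theorem abstract_red {n m : ℕ} (ltr : Fin m → Bool → Fin n × Bool)
    (V : Fin n → Bool → Prop) (J : Fin n → Bool → Bool → Fin m)
    (hV : ∀ i, V i false)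
    (hocc : ∀ i b j, OccursIn ltr i b j ↔ ∃ c, V i c ∧ J i b c = j)
    (h3 : ∀ i, ∃ b, ∀ c c', V i c → V i c' → J i b c = J i b c')
    (D : Set (Set (XCElem n m))) (X : Set (XCElem n m))
    (hD : ∀ S, S ∈ D ↔ ∃ i b j, OccursIn ltr i b j ∧ (S = Sset i b j ∨ S = Tset V J i b j))
    (hX : ∀ e, (e ∈ X ∧ e ∉ coverR ltr) ↔ (∃ j, e = XCElem.s j) ∨ ∃ i c, V i c ∧ e = XCElem.t i c) :
    (∃ σ : Fin n → Bool, ∀ j, ∃ p, σ (ltr j p).1 = (ltr j p).2) ↔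
    (∃ D' ⊆ D,
      (∀ e ∈ X, e ∉ coverR ltr → ∃! S, S ∈ D' ∧ e ∈ S) ∧
      (∀ e ∈ coverR ltr, ∀ S₁ ∈ D', ∀ S₂ ∈ D', e ∈ S₁ → e ∈ S₂ → S₁ = S₂)) := by
  constructor
  · rintro ⟨σ, hσ⟩
    choose p hp using hσ
    refine ⟨{S | (∃ j, S = Sset (ltr j (p j)).1 (ltr j (p j)).2 j) ∨
      ∃ i j, OccursIn ltr i (!σ i) j ∧ S = Tset V J i (!σ i) j}, ?_, ?_, ?_⟩
    · rintro S (⟨j, rfl⟩ | ⟨i, j, ho, rfl⟩)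
      · exact (hD _).2 ⟨_, _, j, ⟨p j, rfl⟩, Or.inl rfl⟩
      · exact (hD _).2 ⟨_, _, j, ho, Or.inr rfl⟩
    · intro e he he'
      rcases (hX e).1 ⟨he, he'⟩ with ⟨j, rfl⟩ | ⟨i, c, hc, rfl⟩
      · refine ⟨_, ⟨Or.inl ⟨j, rfl⟩, by simp [Sset]⟩, ?_⟩
        rintro S ⟨⟨j', rfl⟩ | ⟨i, j', ho, rfl⟩, hS⟩
        · simp [Sset] at hS
          subst hS; rfl
        · simp [Tset] at hS
      · refine ⟨_, ⟨Or.inr ⟨i, J i (!σ i) c, (hocc _ _ _).2 ⟨c, hc, rfl⟩, rfl⟩,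
          Or.inr ⟨c, hc, rfl, rfl⟩⟩, ?_⟩
        rintro S ⟨⟨j', rfl⟩ | ⟨i', j', ho, rfl⟩, hS⟩
        · simp [Sset] at hS
        · rcases hS with hS | ⟨c', hc', rfl, hS⟩
          · cases hS
          · cases hS; rfl
    · rintro e ⟨i, b, j, ho, rfl⟩ S₁ h1 S₂ h2 e1 e2
      have key : ∀ S, ((∃ j, S = Sset (ltr j (p j)).1 (ltr j (p j)).2 j) ∨
        ∃ i j, OccursIn ltr i (!σ i) j ∧ S = Tset V J i (!σ i) j) → XCElem.lit i b j ∈ S →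
        (σ i = b ∧ S = Sset i b j) ∨ (σ i = !b ∧ S = Tset V J i b j) := by
        rintro S (⟨j', rfl⟩ | ⟨i', j', ho, rfl⟩) hS
        · simp [Sset] at hS
          obtain ⟨h1, h2, h3⟩ := hS
          subst h3 h1 h2
          exact Or.inl ⟨hp _, rfl⟩
        · simp [Tset] at hS
          obtain ⟨h1, h2, h3⟩ := hS
          subst h1 h2 h3
          exact Or.inr ⟨by simp, rfl⟩
      rcases key _ h1 e1 with ⟨ha, rfl⟩ | ⟨ha, rfl⟩ <;>
      rcases key _ h2 e2 with ⟨hb, rfl⟩ | ⟨hb, rfl⟩ <;> first | rfl | simp_all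
  · rintro ⟨D', hsub, hex, hR⟩
    have ht : ∀ i c, V i c → ∃ b, Tset V J i b (J i b c) ∈ D' := by
      intro i c hc
      obtain ⟨h1, h2⟩ := (hX (XCElem.t i c)).2 (Or.inr ⟨i, c, hc, rfl⟩)
      obtain ⟨S, ⟨hS, hm⟩, -⟩ := hex _ h1 h2
      obtain ⟨i', b, j, ho, rfl | rfl⟩ := (hD S).1 (hsub hS)
      · simp [Sset] at hm
      · rcases hm with hm | ⟨c', hc', rfl, hm⟩
        · cases hm
        · cases hm; exact ⟨b, hS⟩
    have hu : ∀ i c b b', V i c → Tset V J i b (J i b c) ∈ D' →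
        Tset V J i b' (J i b' c) ∈ D' → b = b' := by
      intro i c b b' hc hb hb'
      obtain ⟨h1, h2⟩ := (hX (XCElem.t i c)).2 (Or.inr ⟨i, c, hc, rfl⟩)
      have := (hex _ h1 h2).unique ⟨hb, Or.inr ⟨c, hc, rfl, rfl⟩⟩ ⟨hb', Or.inr ⟨c, hc, rfl, rfl⟩⟩
      have h3 : XCElem.lit i b (J i b c) ∈ Tset V J i b' (J i b' c) := this ▸ Or.inl rfl
      simp [Tset] at h3
      exact h3.1
    choose τ hτ using fun i => ht i false (hV i)
    have hall : ∀ i c, V i c → Tset V J i (τ i) (J i (τ i) c) ∈ D' := by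
      intro i c hc
      obtain ⟨b, hb⟩ := ht i c hc
      obtain ⟨b0, h0⟩ := h3 i
      by_cases h : b = τ i
      · exact h ▸ hb
      · by_cases h' : τ i = b0
        · rw [h', h0 c false hc (hV i), ← h']; exact hτ i
        · have : b = b0 := by revert h h'; cases b <;> cases b0 <;> cases τ i <;> simp
          rw [this, h0 c false hc (hV i), ← this] at hb
          exact absurd (hu i false _ _ (hV i) hb (hτ i)) h
    refine ⟨fun i => !τ i, fun j => ?_⟩
    obtain ⟨h1, h2⟩ := (hX (XCElem.s j)).2 (Or.inl ⟨j, rfl⟩)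
    obtain ⟨S, ⟨hS, hm⟩, -⟩ := hex _ h1 h2
    obtain ⟨i, b, j', ho, rfl | rfl⟩ := (hD S).1 (hsub hS)
    · simp [Sset] at hm
      subst hm
      obtain ⟨p, hp⟩ := id ho
      refine ⟨p, ?_⟩
      rw [hp]
      by_contra hne
      have hb : τ i = b := by simpa using hne
      subst hb
      obtain ⟨c, hc, rfl⟩ := (hocc _ _ _).1 ho
      have := hR _ ⟨_, _, _, ho, rfl⟩ _ hS _ (hall i c hc) (Or.inl rfl) (Or.inl rfl)
      have h4 : XCElem.s (J i (τ i) c) ∈ Tset V J i (τ i) (J i (τ i) c) := this ▸ Or.inr rfl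
      simp [Tset] at h4
    · simp [Tset] at hm

theorem stmt_10 {n m : ℕ} (ltr : Fin m → Bool → Fin n × Bool)
    (hclean : ∀ j, (ltr j false).1 ≠ (ltr j true).1)
    (cls : Fin n → XCClass) (j₁ j₂ j₃ : Fin n → Fin m)
    (hplus : ∀ i, cls i = XCClass.plus →
      {j | OccursIn ltr i true j} = {j₁ i, j₂ i} ∧ j₁ i ≠ j₂ i ∧
      {j | OccursIn ltr i false j} = {j₃ i})
    (hminus : ∀ i, cls i = XCClass.minus →
      {j | OccursIn ltr i false j} = {j₁ i, j₂ i} ∧ j₁ i ≠ j₂ i ∧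
      {j | OccursIn ltr i true j} = {j₃ i})
    (hstar : ∀ i, cls i = XCClass.star →
      {j | OccursIn ltr i true j} = {j₁ i} ∧ {j | OccursIn ltr i false j} = {j₂ i}) :
    (∃ σ : Fin n → Bool, ∀ j, ∃ p, σ (ltr j p).1 = (ltr j p).2) ↔
    (∃ D' ⊆ coverD ltr cls j₁ j₂ j₃,
      (∀ e ∈ coverX ltr cls, e ∉ coverR ltr → ∃! S, S ∈ D' ∧ e ∈ S) ∧
      (∀ e ∈ coverR ltr, ∀ S₁ ∈ D', ∀ S₂ ∈ D', e ∈ S₁ → e ∈ S₂ → S₁ = S₂)) := by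
  have hocc : ∀ i b j, OccursIn ltr i b j ↔ ∃ c, VV cls i c ∧ JJ cls j₁ j₂ j₃ i b c = j := by
    intro i b j
    rcases h : cls i with _ | _ | _
    · obtain ⟨ha, -, hb⟩ := hplus i h
      have ha := Set.ext_iff.1 ha j
      have hb := Set.ext_iff.1 hb j
      simp only [Set.mem_setOf_eq, Set.mem_insert_iff, Set.mem_singleton_iff] at ha hb
      cases b <;> simp [VV, JJ, h, ha, hb, eq_comm (a := j)]
    · obtain ⟨ha, -, hb⟩ := hminus i h
      have ha := Set.ext_iff.1 ha j
      have hb := Set.ext_iff.1 hb j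
      simp only [Set.mem_setOf_eq, Set.mem_insert_iff, Set.mem_singleton_iff] at ha hb
      cases b <;> simp [VV, JJ, h, ha, hb, eq_comm (a := j)]
    · obtain ⟨ha, hb⟩ := hstar i h
      have ha := Set.ext_iff.1 ha j
      have hb := Set.ext_iff.1 hb j
      simp only [Set.mem_setOf_eq, Set.mem_insert_iff, Set.mem_singleton_iff] at ha hb
      cases b <;> simp [VV, JJ, h, ha, hb, eq_comm (a := j)]
  apply abstract_red ltr (VV cls) (JJ cls j₁ j₂ j₃) (fun i => Or.inl rfl) hocc
  · intro i
    rcases h : cls i with _ | _ | _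
    · exact ⟨false, by simp [JJ, h]⟩
    · exact ⟨true, by simp [JJ, h]⟩
    · exact ⟨true, by simp [JJ, h]⟩
  · have hT : ∀ i b c, VV cls i c → Tset (VV cls) (JJ cls j₁ j₂ j₃) i b (JJ cls j₁ j₂ j₃ i b c) =
        (match cls i, b, c with
        | .plus, true, false => {XCElem.lit i true (j₁ i), XCElem.t i false}
        | .plus, true, true => {XCElem.lit i true (j₂ i), XCElem.t i true}
        | .plus, false, _ => {XCElem.lit i false (j₃ i), XCElem.t i false, XCElem.t i true}
        | .minus, false, false => {XCElem.lit i false (j₁ i), XCElem.t i false}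
        | .minus, false, true => {XCElem.lit i false (j₂ i), XCElem.t i true}
        | .minus, true, _ => {XCElem.lit i true (j₃ i), XCElem.t i false, XCElem.t i true}
        | .star, true, _ => {XCElem.lit i true (j₁ i), XCElem.t i false}
        | .star, false, _ => {XCElem.lit i false (j₂ i), XCElem.t i false}) := by
      intro i b c hc
      ext e
      rcases h : cls i with _ | _ | _
      · have h1 := (hplus i h).2.1
        have h2 := h1.symm
        cases b <;> cases c <;> simp [Tset, JJ, VV, h, h1, h2]
      · have h1 := (hminus i h).2.1
        have h2 := h1.symm
        cases b <;> cases c <;> simp [Tset, JJ, VV, h, h1, h2]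
      · cases b <;> cases c <;> simp [Tset, JJ, VV, h]
    intro S
    constructor
    · rintro (((⟨i, b, j, ho, rfl⟩ | ⟨i, h, hS⟩) | ⟨i, h, hS⟩) | ⟨i, h, hS⟩)
      · exact ⟨i, b, j, ho, Or.inl rfl⟩
      all_goals
        have key : ∀ b c, VV cls i c →
            S = Tset (VV cls) (JJ cls j₁ j₂ j₃) i b (JJ cls j₁ j₂ j₃ i b c) →
            ∃ i b j, OccursIn ltr i b j ∧
              (S = Sset i b j ∨ S = Tset (VV cls) (JJ cls j₁ j₂ j₃) i b j) :=
          fun b c hc hS => ⟨i, b, _, (hocc _ _ _).2 ⟨c, hc, rfl⟩, Or.inr hS⟩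
      · rcases hS with hS | hS | hS
        · exact key true false (by simp [VV, h]) (by rw [hT _ _ _ (by simp [VV, h]), h]; exact hS)
        · exact key true true (by simp [VV, h]) (by rw [hT _ _ _ (by simp [VV, h]), h]; exact hS)
        · exact key false true (by simp [VV, h]) (by rw [hT _ _ _ (by simp [VV, h]), h]; exact hS)
      · rcases hS with hS | hS | hS
        · exact key false false (by simp [VV, h]) (by rw [hT _ _ _ (by simp [VV, h]), h]; exact hS)
        · exact key false true (by simp [VV, h]) (by rw [hT _ _ _ (by simp [VV, h]), h]; exact hS)
        · exact key true true (by simp [VV, h]) (by rw [hT _ _ _ (by simp [VV, h]), h]; exact hS)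
      · rcases hS with hS | hS
        · exact key true false (by simp [VV]) (by rw [hT _ _ _ (by simp [VV]), h]; exact hS)
        · exact key false false (by simp [VV]) (by rw [hT _ _ _ (by simp [VV]), h]; exact hS)
    · rintro ⟨i, b, j, ho, rfl | rfl⟩
      · exact Or.inl (Or.inl (Or.inl ⟨i, b, j, ho, rfl⟩))
      · obtain ⟨c, hc, rfl⟩ := (hocc _ _ _).1 ho
        rw [hT i b c hc]
        rcases h : cls i with _ | _ | _
        · refine Or.inl (Or.inl (Or.inr ⟨i, h, ?_⟩))
          cases b <;> cases c <;> simp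
        · refine Or.inl (Or.inr ⟨i, h, ?_⟩)
          cases b <;> cases c <;> simp
        · refine Or.inr ⟨i, h, ?_⟩
          cases b <;> cases c <;> simp
  · intro e
    rcases e with ⟨i, b, j⟩ | j | ⟨i, c⟩
    · constructor
      · rintro ⟨((h | ⟨_, h⟩) | ⟨_, h⟩) | ⟨_, _, h⟩, h'⟩
        · exact absurd h h'
        all_goals cases h
      · rintro (⟨_, h⟩ | ⟨_, _, _, h⟩) <;> cases h
    · simp [coverX, coverR]
    · cases c <;> simp [coverX, coverR, VV]
end

section
/- Let φ, X, and D be as in the construction of the reduction from 2SAT₃ to 3XCE₂. Then every element of X belongs to exactly two members of the collection D. -/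
/-- To count two members through a point, exhibit both, a witness separating them, and exhaustiveness. -/
theorem ncard_two_aux {α : Type*} (D : Set (Set α)) (e : α) (A B : Set α) (w : α)
    (hA : A ∈ D) (hB : B ∈ D) (eA : e ∈ A) (eB : e ∈ B) (wA : w ∈ A) (wB : w ∉ B)
    (h : ∀ S ∈ D, e ∈ S → S = A ∨ S = B) : {S | S ∈ D ∧ e ∈ S}.ncard = 2 := by
  have hne : A ≠ B := fun hh => wB (hh ▸ wA)
  rw [← Set.ncard_pair hne]
  congr 1
  ext S
  constructor
  · rintro ⟨h1, h2⟩
    exact h S h1 h2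
  · rintro (rfl | rfl)
    · exact ⟨hA, eA⟩
    · exact ⟨hB, eB⟩

/-- Membership in the collection, flattened into nine separate kinds of generator. -/
theorem mem_coverD_aux {n m : ℕ} (ltr : Fin m → Bool → Fin n × Bool) (cls : Fin n → XCClass)
    (j₁ j₂ j₃ : Fin n → Fin m) (S : Set (XCElem n m)) :
    S ∈ coverD ltr cls j₁ j₂ j₃ ↔
    (∃ i b j, OccursIn ltr i b j ∧ S = {XCElem.lit i b j, XCElem.s j}) ∨
    (∃ i, cls i = XCClass.plus ∧ S = {XCElem.lit i true (j₁ i), XCElem.t i false}) ∨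
    (∃ i, cls i = XCClass.plus ∧ S = {XCElem.lit i true (j₂ i), XCElem.t i true}) ∨
    (∃ i, cls i = XCClass.plus ∧
      S = {XCElem.lit i false (j₃ i), XCElem.t i false, XCElem.t i true}) ∨
    (∃ i, cls i = XCClass.minus ∧ S = {XCElem.lit i false (j₁ i), XCElem.t i false}) ∨
    (∃ i, cls i = XCClass.minus ∧ S = {XCElem.lit i false (j₂ i), XCElem.t i true}) ∨
    (∃ i, cls i = XCClass.minus ∧
      S = {XCElem.lit i true (j₃ i), XCElem.t i false, XCElem.t i true}) ∨
    (∃ i, cls i = XCClass.star ∧ S = {XCElem.lit i true (j₁ i), XCElem.t i false}) ∨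
    (∃ i, cls i = XCClass.star ∧ S = {XCElem.lit i false (j₂ i), XCElem.t i false}) := by
  simp only [coverD, Set.mem_union, Set.mem_ofPred_eq, and_or_left, exists_or, or_assoc]

/-- Which generators may contain a given occurrence of a literal. -/
theorem lit_mem_aux {n m : ℕ} (ltr : Fin m → Bool → Fin n × Bool) (cls : Fin n → XCClass)
    (j₁ j₂ j₃ : Fin n → Fin m) (S : Set (XCElem n m))
    (hS : S ∈ coverD ltr cls j₁ j₂ j₃) (i : Fin n) (b : Bool) (j : Fin m)
    (he : XCElem.lit i b j ∈ S) :
    S = {XCElem.lit i b j, XCElem.s j} ∨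
    (cls i = XCClass.plus ∧ b = true ∧ j = j₁ i ∧ S = {XCElem.lit i true (j₁ i), XCElem.t i false}) ∨
    (cls i = XCClass.plus ∧ b = true ∧ j = j₂ i ∧ S = {XCElem.lit i true (j₂ i), XCElem.t i true}) ∨
    (cls i = XCClass.plus ∧ b = false ∧ j = j₃ i ∧ S = {XCElem.lit i false (j₃ i), XCElem.t i false, XCElem.t i true}) ∨
    (cls i = XCClass.minus ∧ b = false ∧ j = j₁ i ∧ S = {XCElem.lit i false (j₁ i), XCElem.t i false}) ∨
    (cls i = XCClass.minus ∧ b = false ∧ j = j₂ i ∧ S = {XCElem.lit i false (j₂ i), XCElem.t i true}) ∨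
    (cls i = XCClass.minus ∧ b = true ∧ j = j₃ i ∧ S = {XCElem.lit i true (j₃ i), XCElem.t i false, XCElem.t i true}) ∨
    (cls i = XCClass.star ∧ b = true ∧ j = j₁ i ∧ S = {XCElem.lit i true (j₁ i), XCElem.t i false}) ∨
    (cls i = XCClass.star ∧ b = false ∧ j = j₂ i ∧ S = {XCElem.lit i false (j₂ i), XCElem.t i false}) := by
  rw [mem_coverD_aux] at hS
  rcases hS with ⟨i', b', j', h, rfl⟩ | ⟨i', h, rfl⟩ | ⟨i', h, rfl⟩ | ⟨i', h, rfl⟩ |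
    ⟨i', h, rfl⟩ | ⟨i', h, rfl⟩ | ⟨i', h, rfl⟩ | ⟨i', h, rfl⟩ | ⟨i', h, rfl⟩ <;>
  simp only [Set.mem_insert_iff, Set.mem_singleton_iff, XCElem.lit.injEq, XCElem.t.injEq,
    reduceCtorEq, or_false, false_or] at he <;> grind

/-- Which generators may contain an auxiliary variable token. -/
theorem t_mem_aux {n m : ℕ} (ltr : Fin m → Bool → Fin n × Bool) (cls : Fin n → XCClass)
    (j₁ j₂ j₃ : Fin n → Fin m) (S : Set (XCElem n m))
    (hS : S ∈ coverD ltr cls j₁ j₂ j₃) (i : Fin n) (b : Bool) (he : XCElem.t i b ∈ S) :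
    (cls i = XCClass.plus ∧ b = false ∧ S = {XCElem.lit i true (j₁ i), XCElem.t i false}) ∨
    (cls i = XCClass.plus ∧ b = true ∧ S = {XCElem.lit i true (j₂ i), XCElem.t i true}) ∨
    (cls i = XCClass.plus ∧ S = {XCElem.lit i false (j₃ i), XCElem.t i false, XCElem.t i true}) ∨
    (cls i = XCClass.minus ∧ b = false ∧ S = {XCElem.lit i false (j₁ i), XCElem.t i false}) ∨
    (cls i = XCClass.minus ∧ b = true ∧ S = {XCElem.lit i false (j₂ i), XCElem.t i true}) ∨
    (cls i = XCClass.minus ∧ S = {XCElem.lit i true (j₃ i), XCElem.t i false, XCElem.t i true}) ∨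
    (cls i = XCClass.star ∧ b = false ∧ S = {XCElem.lit i true (j₁ i), XCElem.t i false}) ∨
    (cls i = XCClass.star ∧ b = false ∧ S = {XCElem.lit i false (j₂ i), XCElem.t i false}) := by
  rw [mem_coverD_aux] at hS
  rcases hS with ⟨i', b', j', h, rfl⟩ | ⟨i', h, rfl⟩ | ⟨i', h, rfl⟩ | ⟨i', h, rfl⟩ |
    ⟨i', h, rfl⟩ | ⟨i', h, rfl⟩ | ⟨i', h, rfl⟩ | ⟨i', h, rfl⟩ | ⟨i', h, rfl⟩ <;>
  simp only [Set.mem_insert_iff, Set.mem_singleton_iff, XCElem.lit.injEq, XCElem.t.injEq,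
    reduceCtorEq, or_false, false_or] at he <;> grind

/-- The first token of any variable lies in precisely two generators. -/
theorem t_false_aux {n m : ℕ} (ltr : Fin m → Bool → Fin n × Bool)
    (cls : Fin n → XCClass) (j₁ j₂ j₃ : Fin n → Fin m)
    (i : Fin n) :
    {S | S ∈ coverD ltr cls j₁ j₂ j₃ ∧ XCElem.t i false ∈ S}.ncard = 2 := by
  cases hc : cls i
  · refine ncard_two_aux _ _ {XCElem.lit i true (j₁ i), XCElem.t i false} {XCElem.lit i false (j₃ i), XCElem.t i false, XCElem.t i true} (XCElem.lit i true (j₁ i))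
      (by rw [mem_coverD_aux]; grind) (by rw [mem_coverD_aux]; grind) (by simp) (by simp) (by simp)
      (by simp) (fun S hS he => by grind [t_mem_aux ltr cls j₁ j₂ j₃ S hS _ _ he])
  · refine ncard_two_aux _ _ {XCElem.lit i false (j₁ i), XCElem.t i false} {XCElem.lit i true (j₃ i), XCElem.t i false, XCElem.t i true} (XCElem.lit i false (j₁ i))
      (by rw [mem_coverD_aux]; grind) (by rw [mem_coverD_aux]; grind) (by simp) (by simp) (by simp)
      (by simp) (fun S hS he => by grind [t_mem_aux ltr cls j₁ j₂ j₃ S hS _ _ he])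
  · refine ncard_two_aux _ _ {XCElem.lit i true (j₁ i), XCElem.t i false} {XCElem.lit i false (j₂ i), XCElem.t i false} (XCElem.lit i true (j₁ i))
      (by rw [mem_coverD_aux]; grind) (by rw [mem_coverD_aux]; grind) (by simp) (by simp) (by simp)
      (by simp) (fun S hS he => by grind [t_mem_aux ltr cls j₁ j₂ j₃ S hS _ _ he])

/-- The second token, present only for variables with three occurrences, behaves likewise. -/
theorem t_true_aux {n m : ℕ} (ltr : Fin m → Bool → Fin n × Bool)
    (cls : Fin n → XCClass) (j₁ j₂ j₃ : Fin n → Fin m)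
    (i : Fin n) (hns : cls i ≠ XCClass.star) :
    {S | S ∈ coverD ltr cls j₁ j₂ j₃ ∧ XCElem.t i true ∈ S}.ncard = 2 := by
  cases hc : cls i
  · refine ncard_two_aux _ _ {XCElem.lit i true (j₂ i), XCElem.t i true} {XCElem.lit i false (j₃ i), XCElem.t i false, XCElem.t i true} (XCElem.lit i true (j₂ i))
      (by rw [mem_coverD_aux]; grind) (by rw [mem_coverD_aux]; grind) (by simp) (by simp) (by simp)
      (by simp) (fun S hS he => by grind [t_mem_aux ltr cls j₁ j₂ j₃ S hS _ _ he])
  · refine ncard_two_aux _ _ {XCElem.lit i false (j₂ i), XCElem.t i true} {XCElem.lit i true (j₃ i), XCElem.t i false, XCElem.t i true} (XCElem.lit i false (j₂ i))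
      (by rw [mem_coverD_aux]; grind) (by rw [mem_coverD_aux]; grind) (by simp) (by simp) (by simp)
      (by simp) (fun S hS he => by grind [t_mem_aux ltr cls j₁ j₂ j₃ S hS _ _ he])
  · exact absurd hc hns

/-- Every literal occurrence is covered by its clause pair; a unique further generator then suffices. -/
theorem lit_pair_aux {n m : ℕ} (ltr : Fin m → Bool → Fin n × Bool) (cls : Fin n → XCClass)
    (j₁ j₂ j₃ : Fin n → Fin m) {i : Fin n} {b : Bool} {j : Fin m} (ho : OccursIn ltr i b j)
    (B : Set (XCElem n m)) (hB : B ∈ coverD ltr cls j₁ j₂ j₃) (hl : XCElem.lit i b j ∈ B)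
    (hs : XCElem.s j ∉ B)
    (h : ∀ S ∈ coverD ltr cls j₁ j₂ j₃, XCElem.lit i b j ∈ S →
      S = {XCElem.lit i b j, XCElem.s j} ∨ S = B) :
    {S | S ∈ coverD ltr cls j₁ j₂ j₃ ∧ XCElem.lit i b j ∈ S}.ncard = 2 := by
  refine ncard_two_aux _ _ {XCElem.lit i b j, XCElem.s j} B (XCElem.s j) ?_ hB (by simp) hl
    (by simp) hs h
  rw [mem_coverD_aux]; exact Or.inl ⟨i, b, j, ho, rfl⟩

/-- Literal occurrences: split according to variable class, polarity and clause index. -/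
theorem lit_aux {n m : ℕ} (ltr : Fin m → Bool → Fin n × Bool)
    (cls : Fin n → XCClass) (j₁ j₂ j₃ : Fin n → Fin m)
    (hplus : ∀ i, cls i = XCClass.plus →
      {j | OccursIn ltr i true j} = {j₁ i, j₂ i} ∧ j₁ i ≠ j₂ i ∧
      {j | OccursIn ltr i false j} = {j₃ i})
    (hminus : ∀ i, cls i = XCClass.minus →
      {j | OccursIn ltr i false j} = {j₁ i, j₂ i} ∧ j₁ i ≠ j₂ i ∧
      {j | OccursIn ltr i true j} = {j₃ i})
    (hstar : ∀ i, cls i = XCClass.star →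
      {j | OccursIn ltr i true j} = {j₁ i} ∧ {j | OccursIn ltr i false j} = {j₂ i}) (i : Fin n) (b : Bool) (j : Fin m)
    (ho : OccursIn ltr i b j) :
    {S | S ∈ coverD ltr cls j₁ j₂ j₃ ∧ XCElem.lit i b j ∈ S}.ncard = 2 := by
  cases hc : cls i
  · have H := hplus i hc
    simp only [Set.ext_iff, Set.mem_ofPred_eq, Set.mem_insert_iff, Set.mem_singleton_iff] at H
    have hcase : (b = true ∧ j = (j₁ i)) ∨ (b = true ∧ j = (j₂ i)) ∨ (b = false ∧ j = (j₃ i)) := by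
      cases b <;> grind
    rcases hcase with ⟨rfl, rfl⟩ | ⟨rfl, rfl⟩ | ⟨rfl, rfl⟩
    · exact lit_pair_aux ltr cls j₁ j₂ j₃ ho {XCElem.lit i true (j₁ i), XCElem.t i false}
        (by rw [mem_coverD_aux]; grind) (by simp) (by simp)
        (fun S hS he => by grind [lit_mem_aux ltr cls j₁ j₂ j₃ S hS _ _ _ he])
    · exact lit_pair_aux ltr cls j₁ j₂ j₃ ho {XCElem.lit i true (j₂ i), XCElem.t i true}
        (by rw [mem_coverD_aux]; grind) (by simp) (by simp)
        (fun S hS he => by grind [lit_mem_aux ltr cls j₁ j₂ j₃ S hS _ _ _ he])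
    · exact lit_pair_aux ltr cls j₁ j₂ j₃ ho {XCElem.lit i false (j₃ i), XCElem.t i false, XCElem.t i true}
        (by rw [mem_coverD_aux]; grind) (by simp) (by simp)
        (fun S hS he => by grind [lit_mem_aux ltr cls j₁ j₂ j₃ S hS _ _ _ he])
  · have H := hminus i hc
    simp only [Set.ext_iff, Set.mem_ofPred_eq, Set.mem_insert_iff, Set.mem_singleton_iff] at H
    have hcase : (b = false ∧ j = (j₁ i)) ∨ (b = false ∧ j = (j₂ i)) ∨ (b = true ∧ j = (j₃ i)) := by
      cases b <;> grind
    rcases hcase with ⟨rfl, rfl⟩ | ⟨rfl, rfl⟩ | ⟨rfl, rfl⟩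
    · exact lit_pair_aux ltr cls j₁ j₂ j₃ ho {XCElem.lit i false (j₁ i), XCElem.t i false}
        (by rw [mem_coverD_aux]; grind) (by simp) (by simp)
        (fun S hS he => by grind [lit_mem_aux ltr cls j₁ j₂ j₃ S hS _ _ _ he])
    · exact lit_pair_aux ltr cls j₁ j₂ j₃ ho {XCElem.lit i false (j₂ i), XCElem.t i true}
        (by rw [mem_coverD_aux]; grind) (by simp) (by simp)
        (fun S hS he => by grind [lit_mem_aux ltr cls j₁ j₂ j₃ S hS _ _ _ he])
    · exact lit_pair_aux ltr cls j₁ j₂ j₃ ho {XCElem.lit i true (j₃ i), XCElem.t i false, XCElem.t i true}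
        (by rw [mem_coverD_aux]; grind) (by simp) (by simp)
        (fun S hS he => by grind [lit_mem_aux ltr cls j₁ j₂ j₃ S hS _ _ _ he])
  · have H := hstar i hc
    simp only [Set.ext_iff, Set.mem_ofPred_eq, Set.mem_insert_iff, Set.mem_singleton_iff] at H
    have hcase : (b = true ∧ j = (j₁ i)) ∨ (b = false ∧ j = (j₂ i)) := by
      cases b <;> grind
    rcases hcase with ⟨rfl, rfl⟩ | ⟨rfl, rfl⟩
    · exact lit_pair_aux ltr cls j₁ j₂ j₃ ho {XCElem.lit i true (j₁ i), XCElem.t i false}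
        (by rw [mem_coverD_aux]; grind) (by simp) (by simp)
        (fun S hS he => by grind [lit_mem_aux ltr cls j₁ j₂ j₃ S hS _ _ _ he])
    · exact lit_pair_aux ltr cls j₁ j₂ j₃ ho {XCElem.lit i false (j₂ i), XCElem.t i false}
        (by rw [mem_coverD_aux]; grind) (by simp) (by simp)
        (fun S hS he => by grind [lit_mem_aux ltr cls j₁ j₂ j₃ S hS _ _ _ he])

/-- Clause elements are covered once per literal, and cleanliness makes both pairs different. -/
theorem s_aux {n m : ℕ} (ltr : Fin m → Bool → Fin n × Bool)
    (hclean : ∀ j, (ltr j false).1 ≠ (ltr j true).1)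
    (cls : Fin n → XCClass) (j₁ j₂ j₃ : Fin n → Fin m)
    (j : Fin m) :
    {S | S ∈ coverD ltr cls j₁ j₂ j₃ ∧ XCElem.s j ∈ S}.ncard = 2 := by
  have hj := hclean j
  refine ncard_two_aux _ _ {XCElem.lit (ltr j false).1 (ltr j false).2 j, XCElem.s j} {XCElem.lit (ltr j true).1 (ltr j true).2 j, XCElem.s j} (XCElem.lit (ltr j false).1 (ltr j false).2 j) ?_ ?_ (by simp) (by simp) (by simp)
    (by simp [hj]) ?_
  · rw [mem_coverD_aux]; exact Or.inl ⟨_, _, _, ⟨false, rfl⟩, rfl⟩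
  · rw [mem_coverD_aux]; exact Or.inl ⟨_, _, _, ⟨true, rfl⟩, rfl⟩
  · intro S hS he
    rw [mem_coverD_aux] at hS
    rcases hS with ⟨i', b', j', h, rfl⟩ | ⟨i', h, rfl⟩ | ⟨i', h, rfl⟩ | ⟨i', h, rfl⟩ | ⟨i', h, rfl⟩ |
      ⟨i', h, rfl⟩ | ⟨i', h, rfl⟩ | ⟨i', h, rfl⟩ | ⟨i', h, rfl⟩ <;>
    simp only [Set.mem_insert_iff, Set.mem_singleton_iff, XCElem.lit.injEq, XCElem.t.injEq,
      XCElem.s.injEq, reduceCtorEq, or_false, false_or] at he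
    subst he
    obtain ⟨p, hp⟩ := h
    cases p <;> simp [hp]

theorem stmt_11 {n m : ℕ} (ltr : Fin m → Bool → Fin n × Bool)
    (hclean : ∀ j, (ltr j false).1 ≠ (ltr j true).1)
    (cls : Fin n → XCClass) (j₁ j₂ j₃ : Fin n → Fin m)
    (hplus : ∀ i, cls i = XCClass.plus →
      {j | OccursIn ltr i true j} = {j₁ i, j₂ i} ∧ j₁ i ≠ j₂ i ∧
      {j | OccursIn ltr i false j} = {j₃ i})
    (hminus : ∀ i, cls i = XCClass.minus →
      {j | OccursIn ltr i false j} = {j₁ i, j₂ i} ∧ j₁ i ≠ j₂ i ∧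
      {j | OccursIn ltr i true j} = {j₃ i})
    (hstar : ∀ i, cls i = XCClass.star →
      {j | OccursIn ltr i true j} = {j₁ i} ∧ {j | OccursIn ltr i false j} = {j₂ i}) :
    ∀ e ∈ coverX ltr cls,
      {S | S ∈ coverD ltr cls j₁ j₂ j₃ ∧ e ∈ S}.ncard = 2 := by
  rintro e (((⟨i, b, j, h, rfl⟩ | ⟨j, rfl⟩) | ⟨i, rfl⟩) | ⟨i, h, rfl⟩)
  · exact lit_aux ltr cls j₁ j₂ j₃ hplus hminus hstar i b j h
  · exact s_aux ltr hclean cls j₁ j₂ j₃ j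
  · exact t_false_aux ltr cls j₁ j₂ j₃ i
  · exact t_true_aux ltr cls j₁ j₂ j₃ i h
end

section
/- Let X be a finite set, let M be a perfect matching over X × X, and let u, v ∈ X. If u is linked to v in M, then v is linked to u in M. -/
/-- Two pairs agree if they share the first coordinate or the second coordinate. -/
def Agrees {X : Type*} (p q : X × X) : Prop := p.1 = q.1 ∨ p.2 = q.2

/-- A matching over `X × X`: no two distinct elements agree. -/
def IsMatching {X : Type*} (M : Set (X × X)) : Prop :=
  ∀ p ∈ M, ∀ q ∈ M, p ≠ q → ¬ Agrees p q

/-- A perfect matching over `X × X`: a matching in which every element of `X` occurs as a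
first coordinate and as a second coordinate. -/
def IsPerfectMatching {X : Type*} (M : Set (X × X)) : Prop :=
  IsMatching M ∧ (∀ u : X, ∃ v, (u, v) ∈ M) ∧ (∀ v : X, ∃ u, (u, v) ∈ M)

/-- `u` is linked to `v` in `M`: there exist an odd number `t ≥ 1` and elements
`z 1, …, z t` with `(u, z 1) ∈ M`, `(z t, v) ∈ M`, and `(z i, z (i+1)) ∈ M` for
every `i ∈ [t−1]`. -/
def Linked {X : Type*} (M : Set (X × X)) (u v : X) : Prop :=
  ∃ t : ℕ, Odd t ∧ ∃ z : ℕ → X,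
    (u, z 1) ∈ M ∧ (z t, v) ∈ M ∧ ∀ i, 1 ≤ i → i < t → (z i, z (i + 1)) ∈ M

theorem stmt_13 {X : Type*} [Finite X] (M : Set (X × X))
    (hM : IsPerfectMatching M) (u v : X) (h : Linked M u v) : Linked M v u := by
  obtain ⟨hm, h1, h2⟩ := hM
  choose f hf using h1
  have huniq : ∀ a b, (a, b) ∈ M → b = f a := by
    intro a b hab
    by_contra hne
    exact hm _ hab _ (hf a) (fun h => hne (congrArg Prod.snd h)) (Or.inl rfl)
  have hinj : Function.Injective f := by
    intro a b hab
    by_contra hne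
    exact hm _ (hf a) _ (hf b) (fun h => hne (congrArg Prod.fst h)) (Or.inr hab)
  obtain ⟨t, ht, z, hz1, hzt, hz⟩ := h
  have ht1 : 1 ≤ t := ht.pos
  have key : ∀ i, 1 ≤ i → i ≤ t → z i = f^[i] u := by
    intro i hi
    induction i, hi using Nat.le_induction with
    | base => intro _; simpa using huniq _ _ hz1
    | succ n hn ih =>
      intro hnt
      rw [Function.iterate_succ_apply', ← ih (by omega)]
      exact huniq _ _ (hz n hn (by omega))
  have hv : v = f^[t + 1] u := by
    rw [Function.iterate_succ_apply', ← key t ht1 le_rfl]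
    exact huniq _ _ hzt
  obtain ⟨N, hN, hp⟩ := hinj.mem_periodicPts u
  obtain ⟨k, hk⟩ := ht
  obtain ⟨m, rfl⟩ : ∃ m, N = m + 1 := ⟨N - 1, by omega⟩
  have hper : f^[(m + 1) * (2 * (t + 1))] u = u := hp.mul_const _
  have hs : (m + 1) * (2 * (t + 1)) = (2 * (m * (t + 1)) + t + 1) + (t + 1) := by ring
  rw [hs, Function.iterate_add_apply, ← hv, Function.iterate_succ_apply'] at hper
  refine ⟨2 * (m * (t + 1)) + t, ⟨m * (t + 1) + k, by rw [hk]; ring⟩, fun i => f^[i] v, ?_, ?_, ?_⟩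
  · exact hf v
  · have := hf (f^[2 * (m * (t + 1)) + t] v)
    rwa [hper] at this
  · intro i _ _
    simp only [Function.iterate_succ_apply']
    exact hf _
end

section
/- Let X be a finite set, let M ⊆ X × X, and let M' ⊆ M be a perfect matching over X × X. Let u, v ∈ X be distinct and suppose u is linked to v in M'. Then, in the directed graph with vertex set X and edge set {(a,b) ∈ M : a ≠ b}, there exists a directed walk from u to v and a directed walk from v to u. -/
theorem stmt_15 {X : Type*} [Finite X] (M M' : Set (X × X)) (hsub : M' ⊆ M)
    (hM' : IsPerfectMatching M') (u v : X) (huv : u ≠ v) (h : Linked M' u v) :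
    Relation.ReflTransGen (fun a b : X => (a, b) ∈ M ∧ a ≠ b) u v ∧
    Relation.ReflTransGen (fun a b : X => (a, b) ∈ M ∧ a ≠ b) v u := by
  obtain ⟨hm, hl, -⟩ := hM'
  choose f hf using hl
  have huniq : ∀ a b, (a, b) ∈ M' → b = f a := by
    intro a b hab
    by_contra hne
    exact hm _ hab _ (hf a) (fun e => hne (Prod.ext_iff.1 e).2) (Or.inl rfl)
  have hinj : Function.Injective f := by
    intro a b hab
    by_contra hne
    exact hm _ (hf a) _ (hf b) (fun e => hne (Prod.ext_iff.1 e).1) (Or.inr hab)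
  have hstep : ∀ (n : ℕ) (a : X),
      Relation.ReflTransGen (fun a b : X => (a, b) ∈ M ∧ a ≠ b) a (f^[n] a) := by
    intro n a
    induction n with
    | zero => exact Relation.ReflTransGen.refl
    | succ n ih =>
      rw [Function.iterate_succ_apply']
      by_cases he : f^[n] a = f (f^[n] a)
      · rw [← he]; exact ih
      · exact ih.tail ⟨hsub (hf _), he⟩
  obtain ⟨t, ht, z, h1, h2, h3⟩ := h
  have hz : ∀ i, 1 ≤ i → i ≤ t → z i = f^[i] u := by
    intro i hi
    induction i, hi using Nat.le_induction with
    | base => intro _; exact huniq _ _ h1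
    | succ i hi ih =>
      intro hit
      rw [Function.iterate_succ_apply', ← ih (by omega)]
      exact huniq _ _ (h3 i hi (by omega))
  have hv : v = f^[t + 1] u := by
    rw [Function.iterate_succ_apply', ← hz t ht.pos le_rfl]
    exact huniq _ _ h2
  obtain ⟨m, hmpos, hper⟩ := hinj.mem_periodicPts u
  have hu : f^[m * (t + 1) - (t + 1)] v = u := by
    rw [hv, ← Function.iterate_add_apply, Nat.sub_add_cancel (Nat.le_mul_of_pos_left _ hmpos)]
    exact hper.mul_const (t + 1)
  refine ⟨hv ▸ hstep (t + 1) u, ?_⟩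
  have := hstep (m * (t + 1) - (t + 1)) v
  rwa [hu] at this
end

section
/- Let G = (V,E) be a finite directed graph, let s, t ∈ V be distinct, assume every edge leaving s and every edge entering t has its other endpoint in V⁻ := V − {s,t}, and enumerate V⁻ = {v₁,…,vₙ} with n ≥ 1. Let X and M be as defined in the construction below. If there exists a perfect matching M' ⊆ M over X × X in which s is linked to t, then G contains a directed path from s to t. -/
/-- The elements of the AP2DM instance built from a directed graph with source `s` and
sink `t`: `src` stands for `s`, `snk` for `t`, and `node v l` for the element `[v, l]`
(with layer `l ∈ {0, 1, 2}`). -/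
inductive APElt (V : Type*) where
  | src : APElt V
  | snk : APElt V
  | node : V → Fin 3 → APElt V

/-- The universe `X = {s, t} ∪ {[v, l] : v ∈ V⁻, l ∈ {0,1,2}}`. -/
def apX {V : Type*} (s t : V) : Set (APElt V) :=
  {APElt.src, APElt.snk} ∪ {x | ∃ w l, w ≠ s ∧ w ≠ t ∧ x = APElt.node w l}

/-- The set `M = M₀ ∪ M₁ ∪ M₂ ∪ M₃ ∪ M₄ ∪ M₅ ∪ M₆ ⊆ X × X` of the construction, where
`V⁻` is enumerated as `vmap 0, …, vmap (n-1)`. -/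
def apM {V : Type*} (E : V → V → Prop) (s t : V) (n : ℕ) (hn : 0 < n)
    (vmap : Fin n → V) : Set (APElt V × APElt V) :=
  -- M₀
  {p | ∃ v w, v ≠ s ∧ v ≠ t ∧ w ≠ s ∧ w ≠ t ∧ E v w ∧
        p = (APElt.node v 0, APElt.node w 0)} ∪
  -- M₁
  {p | ∃ i j : Fin n, (j : ℕ) = (i : ℕ) + 1 ∧
        (p = (APElt.node (vmap i) 1, APElt.node (vmap j) 1) ∨
         p = (APElt.node (vmap j) 1, APElt.node (vmap i) 1))} ∪
  -- M₂
  {p | ∃ i j : Fin n, (j : ℕ) = (i : ℕ) + 1 ∧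
        (p = (APElt.node (vmap j) 2, APElt.node (vmap i) 2) ∨
         p = (APElt.node (vmap i) 2, APElt.node (vmap j) 2))} ∪
  -- M₃
  {p | ∃ w, w ≠ s ∧ w ≠ t ∧
        (p = (APElt.node w 2, APElt.node w 0) ∨ p = (APElt.node w 0, APElt.node w 1))} ∪
  -- M₄
  {(APElt.node (vmap ⟨0, hn⟩) 1, APElt.src),
   (APElt.node (vmap ⟨n - 1, by omega⟩) 1, APElt.src),
   (APElt.snk, APElt.node (vmap ⟨0, hn⟩) 2),
   (APElt.snk, APElt.node (vmap ⟨n - 1, by omega⟩) 2)} ∪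
  -- M₅
  {p | ∃ u, u ≠ s ∧ u ≠ t ∧
        ((E s u ∧ p = (APElt.src, APElt.node u 0)) ∨
         (E u t ∧ p = (APElt.node u 0, APElt.snk)))} ∪
  -- M₆
  {p | ∃ z ∈ apX s t, p = (z, z)}

/-- A matching over `X × X`: no two distinct elements agree (share a first or a second
coordinate). -/
def IsAPMatching {α : Type*} (M : Set (α × α)) : Prop :=
  ∀ p ∈ M, ∀ q ∈ M, p ≠ q → ¬(p.1 = q.1 ∨ p.2 = q.2)

/-- A perfect matching over `X × X` for a set `X`: a matching `M ⊆ X × X` in which every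
element of `X` occurs as a first coordinate and as a second coordinate. -/
def IsPerfectOn {α : Type*} (X : Set α) (M : Set (α × α)) : Prop :=
  M ⊆ X ×ˢ X ∧ IsAPMatching M ∧
    (∀ x ∈ X, ∃ y, (x, y) ∈ M) ∧ (∀ x ∈ X, ∃ y, (y, x) ∈ M)

/-- `u` is linked to `v` in `M`: there exist an odd number `t ≥ 1` and elements
`z 1, …, z t` of `X` with `(u, z 1) ∈ M`, `(z t, v) ∈ M`, and `(z i, z (i+1)) ∈ M`
for every `i ∈ [t−1]`. -/
def LinkedIn {α : Type*} (X : Set α) (M : Set (α × α)) (u v : α) : Prop :=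
  ∃ t : ℕ, Odd t ∧ ∃ z : ℕ → α, (∀ i, 1 ≤ i → i ≤ t → z i ∈ X) ∧
    (u, z 1) ∈ M ∧ (z t, v) ∈ M ∧ ∀ i, 1 ≤ i → i < t → (z i, z (i + 1)) ∈ M

/-- Invariant along walks starting from `src`. -/
def apInv {V : Type*} (E : V → V → Prop) (s : V) : APElt V → Prop
  | APElt.src => True
  | APElt.snk => False
  | APElt.node v l => (l = 0 → Relation.ReflTransGen E s v) ∧ l ≠ 2

theorem apInv_step {V : Type*} (E : V → V → Prop) (s t : V)
    (n : ℕ) (hn : 0 < n) (vmap : Fin n → V) (hcon : ¬ Relation.ReflTransGen E s t)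
    (x y : APElt V) (hxy : (x, y) ∈ apM E s t n hn vmap) (hx : apInv E s x) :
    apInv E s y := by
  rcases hxy with (((((h | h) | h) | h) | h) | h) | h
  · obtain ⟨v, w, -, -, -, -, hE, h⟩ := h
    cases h
    exact ⟨fun _ => (hx.1 rfl).tail hE, by decide⟩
  · obtain ⟨i, j, -, h | h⟩ := h <;> cases h <;> simp [apInv]
  · obtain ⟨i, j, -, h | h⟩ := h <;> cases h <;> exact absurd rfl hx.2
  · obtain ⟨w, -, -, h | h⟩ := h <;> cases h
    · exact absurd rfl hx.2
    · simp [apInv]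
  · rcases h with h | h | h | h <;> cases h
    · trivial
    · trivial
    · exact hx.elim
    · exact hx.elim
  · obtain ⟨u, -, -, ⟨hE, h⟩ | ⟨hE, h⟩⟩ := h <;> cases h
    · exact ⟨fun _ => Relation.ReflTransGen.single hE, by decide⟩
    · exact hcon ((hx.1 rfl).tail hE)
  · obtain ⟨z, -, h⟩ := h
    cases h
    exact hx

theorem stmt_16 {V : Type*} [Fintype V] (E : V → V → Prop) (s t : V) (hst : s ≠ t)
    (hs : ∀ u, E s u → u ≠ s ∧ u ≠ t) (ht : ∀ u, E u t → u ≠ s ∧ u ≠ t)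
    (n : ℕ) (hn : 0 < n) (vmap : Fin n → V) (hinj : Function.Injective vmap)
    (hrange : Set.range vmap = {x | x ≠ s ∧ x ≠ t})
    (h : ∃ M' : Set (APElt V × APElt V), M' ⊆ apM E s t n hn vmap ∧
      IsPerfectOn (apX s t) M' ∧ LinkedIn (apX s t) M' APElt.src APElt.snk) :
    Relation.ReflTransGen E s t := by
  by_contra hcon
  obtain ⟨M', hsub, -, k, hk, z, -, h1, h2, h3⟩ := h
  have step := apInv_step E s t n hn vmap hcon
  have key : ∀ i, 1 ≤ i → i ≤ k → apInv E s (z i) := by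
    intro i hi
    induction i, hi using Nat.le_induction with
    | base => exact fun _ => step _ _ (hsub h1) trivial
    | succ m hm ih =>
      exact fun hmk => step _ _ (hsub (h3 m hm (by omega))) (ih (by omega))
  have hk1 : 1 ≤ k := hk.pos
  exact step _ _ (hsub h2) (key k hk1 le_rfl)
end

section
/- Let G = (V,E) be a finite directed graph, let s, t ∈ V be distinct, assume every edge leaving s and every edge entering t has its other endpoint in V⁻ := V − {s,t}, and enumerate V⁻ = {v₁,…,vₙ} with n ≥ 1. Let X and M be as defined in the construction below. Suppose G contains a simple directed path (s, w₁, …, w_{k−1}, t) with k ≥ 2 whose interior vertices w₁,…,w_{k−1} all lie in V⁻ and form a proper subset of V⁻. Then there exists a perfect matching M' ⊆ M over X × X in which s is linked to t. -/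
theorem ap_cycle {α : Type*} (X : Set α) (M : Set (α × α)) (hd : ∀ z ∈ X, (z, z) ∈ M)
    (L : ℕ) (hL : 0 < L) (c : ℕ → α) (hX : ∀ i < L, c i ∈ X)
    (hi : ∀ i < L, ∀ j < L, c i = c j → i = j)
    (hstep : ∀ i, i + 1 < L → (c i, c (i + 1)) ∈ M) (hlast : (c (L - 1), c 0) ∈ M)
    (k : ℕ) (hk : 2 ≤ k) (hkL : k < L) (hpar : Even k ∨ Odd L) :
    ∃ M' : Set (α × α), M' ⊆ M ∧ IsPerfectOn X M' ∧ LinkedIn X M' (c 0) (c k) := by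
  have hnext : ∀ i < L, (i + 1) % L = if i + 1 < L then i + 1 else 0 := by
    intro i h
    split_ifs with h'
    · exact Nat.mod_eq_of_lt h'
    · have : i + 1 = L := by omega
      rw [this, Nat.mod_self]
  have hin : ∀ i < L, ∀ j < L, (i + 1) % L = (j + 1) % L → i = j := by
    intro i h j h'
    rw [hnext i h, hnext j h']
    intro e
    split_ifs at e <;> omega
  have hm : ∀ i, i % L < L := fun i => Nat.mod_lt _ hL
  have hmem : ∀ i, (c (i % L), c ((i + 1) % L)) ∈
      ({p | ∃ i < L, p = (c i, c ((i + 1) % L))} ∪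
        {p | ∃ z ∈ X, (∀ i < L, c i ≠ z) ∧ p = (z, z)} : Set (α × α)) := by
    intro i
    left
    exact ⟨i % L, hm i, by simp⟩
  refine ⟨{p | ∃ i < L, p = (c i, c ((i + 1) % L))} ∪
    {p | ∃ z ∈ X, (∀ i < L, c i ≠ z) ∧ p = (z, z)}, ?_, ⟨?_, ?_, ?_, ?_⟩, ?_⟩
  · rintro p (⟨i, h, rfl⟩ | ⟨z, hz, -, rfl⟩)
    · rw [hnext i h]
      split_ifs with h'
      · exact hstep i h'
      · have : i = L - 1 := by omega
        rw [this]; exact hlast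
    · exact hd z hz
  · rintro p (⟨i, h, rfl⟩ | ⟨z, hz, -, rfl⟩)
    · exact ⟨hX i h, hX _ (hm _)⟩
    · exact ⟨hz, hz⟩
  · rintro p (⟨i, h, rfl⟩ | ⟨z, hz, hz', rfl⟩) q (⟨j, h', rfl⟩ | ⟨y, hy, hy', rfl⟩) hne hor
    · have : i = j := by
        rcases hor with e | e
        · exact hi i h j h' e
        · exact hin i h j h' (hi _ (hm _) _ (hm _) e)
      subst this
      exact hne rfl
    · rcases hor with e | e
      · exact hy' i h e
      · exact hy' _ (hm _) e
    · rcases hor with e | e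
      · exact hz' j h' e.symm
      · exact hz' _ (hm _) e.symm
    · rcases hor with e | e <;> exact hne (Prod.ext e e)
  · intro x hx
    by_cases h : ∃ i < L, c i = x
    · obtain ⟨i, h, rfl⟩ := h
      exact ⟨_, Or.inl ⟨i, h, rfl⟩⟩
    · push Not at h
      exact ⟨x, Or.inr ⟨x, hx, h, rfl⟩⟩
  · intro x hx
    by_cases h : ∃ i < L, c i = x
    · obtain ⟨i, h, rfl⟩ := h
      rcases Nat.eq_zero_or_pos i with h0 | h0
      · refine ⟨c (L - 1), Or.inl ⟨L - 1, by omega, ?_⟩⟩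
        rw [Nat.sub_add_cancel hL, Nat.mod_self, h0]
      · refine ⟨c (i - 1), Or.inl ⟨i - 1, by omega, ?_⟩⟩
        rw [Nat.sub_add_cancel h0, Nat.mod_eq_of_lt h]
    · push Not at h
      exact ⟨x, Or.inr ⟨x, hx, h, rfl⟩⟩
  · have key : ∀ T, Odd T → (T + 1) % L = k →
        LinkedIn X ({p | ∃ i < L, p = (c i, c ((i + 1) % L))} ∪
          {p | ∃ z ∈ X, (∀ i < L, c i ≠ z) ∧ p = (z, z)}) (c 0) (c k) := by
      intro T hT hTk
      refine ⟨T, hT, fun i => c (i % L), fun i _ _ => hX _ (hm _), ?_, ?_, fun i _ _ => hmem i⟩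
      · have := hmem 0
        rwa [Nat.zero_mod] at this
      · have := hmem T
        rwa [hTk] at this
    by_cases hek : Even k
    · refine key (k - 1) ?_ ?_
      · rcases hek with ⟨a, ha⟩
        exact ⟨a - 1, by omega⟩
      · rw [Nat.sub_add_cancel (by omega), Nat.mod_eq_of_lt hkL]
    · have hoL : Odd L := by tauto
      rw [Nat.not_even_iff_odd] at hek
      refine key (k - 1 + L) ?_ ?_
      · rcases hek with ⟨a, ha⟩
        rcases hoL with ⟨b, hb⟩
        exact ⟨a + b, by omega⟩
      · have : k - 1 + L + 1 = k + L := by omega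
        rw [this, Nat.add_mod_right, Nat.mod_eq_of_lt hkL]

theorem stmt_17 {V : Type*} [Fintype V] (E : V → V → Prop) (s t : V) (hst : s ≠ t)
    (hs : ∀ u, E s u → u ≠ s ∧ u ≠ t) (ht : ∀ u, E u t → u ≠ s ∧ u ≠ t)
    (n : ℕ) (hn : 0 < n) (vmap : Fin n → V) (hinj : Function.Injective vmap)
    (hrange : Set.range vmap = {x | x ≠ s ∧ x ≠ t})
    -- a simple directed path (s, w 1, …, w (k−1), t) whose interior vertices lie in V⁻
    (k : ℕ) (hk : 2 ≤ k) (w : ℕ → V)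
    (hw₁ : E s (w 1)) (hwₖ : E (w (k - 1)) t)
    (hmid : ∀ i, 1 ≤ i → i + 1 ≤ k - 1 → E (w i) (w (i + 1)))
    (hwV : ∀ i, 1 ≤ i → i ≤ k - 1 → w i ≠ s ∧ w i ≠ t)
    (hsimple : ∀ i j, 1 ≤ i → i ≤ k - 1 → 1 ≤ j → j ≤ k - 1 → w i = w j → i = j)
    -- the interior vertices form a proper subset of V⁻
    (hproper : ∃ x, x ≠ s ∧ x ≠ t ∧ ∀ i, 1 ≤ i → i ≤ k - 1 → w i ≠ x) :
    ∃ M' : Set (APElt V × APElt V), M' ⊆ apM E s t n hn vmap ∧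
      IsPerfectOn (apX s t) M' ∧ LinkedIn (apX s t) M' APElt.src APElt.snk := by
  classical
  obtain ⟨x, hxs, hxt, hxw⟩ := hproper
  have hvm : ∀ i, vmap i ≠ s ∧ vmap i ≠ t := by
    intro i
    have : vmap i ∈ Set.range vmap := ⟨i, rfl⟩
    rw [hrange] at this
    exact this
  obtain ⟨⟨p, hp⟩, hpx⟩ : x ∈ Set.range vmap := by rw [hrange]; exact ⟨hxs, hxt⟩
  obtain ⟨v, hv⟩ : ∃ v : ℕ → V, ∀ j (h : j < n), v j = vmap ⟨j, h⟩ :=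
    ⟨fun j => if h : j < n then vmap ⟨j, h⟩ else s, fun j h => by simp [h]⟩
  have hvV : ∀ j < n, v j ≠ s ∧ v j ≠ t := fun j h => by rw [hv j h]; exact hvm _
  have hvi : ∀ i < n, ∀ j < n, v i = v j → i = j := by
    intro i h j h' e
    rw [hv i h, hv j h'] at e
    simpa using hinj e
  have hvp : v p = x := by rw [hv p hp, hpx]
  obtain ⟨c, hc⟩ : ∃ c : ℕ → APElt V, ∀ i, c i =
      if i = 0 then APElt.src else if i < k then APElt.node (w i) 0
      else if i = k then APElt.snk
      else if i ≤ k + 1 + p then APElt.node (v (i - k - 1)) 2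
      else if i = k + 2 + p then APElt.node x 0
      else APElt.node (v (k + 3 + 2 * p - i)) 1 := ⟨_, fun _ => rfl⟩
  have c0 : c 0 = APElt.src := by rw [hc]; simp
  have c1 : ∀ i, 1 ≤ i → i < k → c i = APElt.node (w i) 0 := by
    intro i h h'; rw [hc, if_neg (by omega), if_pos h']
  have c2 : c k = APElt.snk := by rw [hc, if_neg (by omega), if_neg (by omega), if_pos rfl]
  have c3 : ∀ j, j ≤ p → c (k + 1 + j) = APElt.node (v j) 2 := by
    intro j h
    rw [hc, if_neg (by omega), if_neg (by omega), if_neg (by omega), if_pos (by omega)]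
    congr 2; omega
  have c4 : c (k + 2 + p) = APElt.node x 0 := by
    rw [hc, if_neg (by omega), if_neg (by omega), if_neg (by omega), if_neg (by omega),
      if_pos rfl]
  have c5 : ∀ j, j ≤ p → c (k + 3 + 2 * p - j) = APElt.node (v j) 1 := by
    intro j h
    rw [hc, if_neg (by omega), if_neg (by omega), if_neg (by omega), if_neg (by omega),
      if_neg (by omega)]
    congr 2; omega
  have cases : ∀ i < k + 4 + 2 * p, i = 0 ∨ (1 ≤ i ∧ i < k) ∨ i = k ∨
      (∃ j ≤ p, i = k + 1 + j) ∨ i = k + 2 + p ∨ (∃ j ≤ p, i = k + 3 + 2 * p - j) := by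
    intro i h
    by_cases h1 : i < k
    · omega
    by_cases h2 : i = k
    · omega
    by_cases h3 : i ≤ k + 1 + p
    · exact Or.inr (Or.inr (Or.inr (Or.inl ⟨i - k - 1, by omega, by omega⟩)))
    by_cases h4 : i = k + 2 + p
    · omega
    · exact Or.inr (Or.inr (Or.inr (Or.inr (Or.inr ⟨k + 3 + 2 * p - i, by omega, by omega⟩))))
  have hd : ∀ z ∈ apX s t, (z, z) ∈ apM E s t n hn vmap := fun z hz => Or.inr ⟨z, hz, rfl⟩
  have hX : ∀ i < k + 4 + 2 * p, c i ∈ apX s t := by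
    intro i h
    rcases cases i h with rfl | ⟨h1, h2⟩ | rfl | ⟨j, hj, rfl⟩ | rfl | ⟨j, hj, rfl⟩
    · rw [c0]; exact Or.inl (Or.inl rfl)
    · rw [c1 i h1 h2]
      exact Or.inr ⟨_, _, (hwV i h1 (by omega)).1, (hwV i h1 (by omega)).2, rfl⟩
    · rw [c2]; exact Or.inl (Or.inr rfl)
    · rw [c3 j hj]; exact Or.inr ⟨_, _, (hvV j (by omega)).1, (hvV j (by omega)).2, rfl⟩
    · rw [c4]; exact Or.inr ⟨_, _, hxs, hxt, rfl⟩
    · rw [c5 j hj]; exact Or.inr ⟨_, _, (hvV j (by omega)).1, (hvV j (by omega)).2, rfl⟩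
  have hi : ∀ i < k + 4 + 2 * p, ∀ j < k + 4 + 2 * p, c i = c j → i = j := by
    have rep : ∀ i < k + 4 + 2 * p, (i = 0 ∧ c i = APElt.src) ∨
        ((1 ≤ i ∧ i < k) ∧ c i = APElt.node (w i) 0) ∨ (i = k ∧ c i = APElt.snk) ∨
        (∃ j, (j ≤ p ∧ i = k + 1 + j) ∧ c i = APElt.node (v j) 2) ∨
        (i = k + 2 + p ∧ c i = APElt.node x 0) ∨
        (∃ j, (j ≤ p ∧ i = k + 3 + 2 * p - j) ∧ c i = APElt.node (v j) 1) := by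
      intro i h
      rcases cases i h with rfl | ⟨h1, h2⟩ | rfl | ⟨j, hj, rfl⟩ | rfl | ⟨j, hj, rfl⟩
      · exact Or.inl ⟨rfl, c0⟩
      · exact Or.inr (Or.inl ⟨⟨h1, h2⟩, c1 i h1 h2⟩)
      · exact Or.inr (Or.inr (Or.inl ⟨rfl, c2⟩))
      · exact Or.inr (Or.inr (Or.inr (Or.inl ⟨j, ⟨hj, rfl⟩, c3 j hj⟩)))
      · exact Or.inr (Or.inr (Or.inr (Or.inr (Or.inl ⟨rfl, c4⟩))))
      · exact Or.inr (Or.inr (Or.inr (Or.inr (Or.inr ⟨j, ⟨hj, rfl⟩, c5 j hj⟩))))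
    intro i h i' h' e
    have r := rep i h
    have r' := rep i' h'
    clear rep cases c0 c1 c2 c3 c4 c5 hc hX hd
    rcases r with ⟨q, ci⟩ | ⟨q, ci⟩ | ⟨q, ci⟩ | ⟨j, q, ci⟩ | ⟨q, ci⟩ | ⟨j, q, ci⟩ <;>
    rcases r' with ⟨q', ci'⟩ | ⟨q', ci'⟩ | ⟨q', ci'⟩ | ⟨j', q', ci'⟩ | ⟨q', ci'⟩ | ⟨j', q', ci'⟩ <;>
    rw [ci, ci'] at e <;> clear ci ci' <;>
    first
    | omega
    | (exfalso; simp at e; done)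
    | (have e := (APElt.node.inj e).1
       first
       | exact hsimple i i' q.1 (by omega) q'.1 (by omega) e
       | exact absurd e (hxw i q.1 (by omega))
       | exact absurd e.symm (hxw i' q'.1 (by omega))
       | (have := hvi j (by omega) j' (by omega) e
          omega))
  have hlast : (c (k + 4 + 2 * p - 1), c 0) ∈ apM E s t n hn vmap := by
    have h := c5 0 (by omega)
    have e : k + 4 + 2 * p - 1 = k + 3 + 2 * p - 0 := by omega
    rw [e, h, c0, hv 0 hn]
    exact Or.inl (Or.inl (Or.inr (Or.inl rfl)))
  have hstep : ∀ i, i + 1 < k + 4 + 2 * p → (c i, c (i + 1)) ∈ apM E s t n hn vmap := by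
    intro i h
    rcases cases i (by omega) with rfl | ⟨h1, h2⟩ | rfl | ⟨j, hj, rfl⟩ | rfl | ⟨j, hj, rfl⟩
    · rw [c0, c1 (0 + 1) (by omega) (by omega)]
      exact Or.inl (Or.inr ⟨w 1, (hs _ hw₁).1, (hs _ hw₁).2, Or.inl ⟨hw₁, rfl⟩⟩)
    · rw [c1 i h1 h2]
      by_cases h3 : i + 1 < k
      · rw [c1 (i + 1) (by omega) h3]
        have a := hwV i h1 (by omega)
        have b := hwV (i + 1) (by omega) (by omega)
        exact Or.inl (Or.inl (Or.inl (Or.inl (Or.inl (Or.inl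
          ⟨_, _, a.1, a.2, b.1, b.2, hmid i h1 (by omega), rfl⟩)))))
      · have e : i + 1 = k := by omega
        have e' : k - 1 = i := by omega
        rw [e, c2]
        rw [e'] at hwₖ
        exact Or.inl (Or.inr ⟨w i, (ht _ hwₖ).1, (ht _ hwₖ).2, Or.inr ⟨hwₖ, rfl⟩⟩)
    · have := c3 0 (by omega)
      rw [add_zero] at this
      rw [c2, this, hv 0 hn]
      exact Or.inl (Or.inl (Or.inr (Or.inr (Or.inr (Or.inl rfl)))))
    · rw [c3 j hj]
      by_cases h3 : j + 1 ≤ p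
      · have := c3 (j + 1) h3
        rw [← add_assoc] at this
        rw [this, hv j (by omega), hv (j + 1) (by omega)]
        exact Or.inl (Or.inl (Or.inl (Or.inl (Or.inr ⟨⟨j, by omega⟩, ⟨j + 1, by omega⟩, rfl,
          Or.inr rfl⟩))))
      · have e : j = p := by omega
        subst e
        have e : k + 1 + j + 1 = k + 2 + j := by omega
        rw [e, c4, hvp]
        exact Or.inl (Or.inl (Or.inl (Or.inr ⟨x, hxs, hxt, Or.inl rfl⟩)))
    · have h5 := c5 p le_rfl
      have e : k + 3 + 2 * p - p = k + 2 + p + 1 := by omega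
      rw [e, hvp] at h5
      rw [c4, h5]
      exact Or.inl (Or.inl (Or.inl (Or.inr ⟨x, hxs, hxt, Or.inr rfl⟩)))
    · rw [c5 j hj]
      obtain ⟨j, rfl⟩ : ∃ m, j = m + 1 := ⟨j - 1, by omega⟩
      have e : k + 3 + 2 * p - (j + 1) + 1 = k + 3 + 2 * p - j := by omega
      rw [e, c5 j (by omega), hv j (by omega), hv (j + 1) (by omega)]
      exact Or.inl (Or.inl (Or.inl (Or.inl (Or.inl (Or.inr ⟨⟨j, by omega⟩, ⟨j + 1, by omega⟩, rfl,
          Or.inr rfl⟩)))))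
  have := ap_cycle (apX s t) (apM E s t n hn vmap) hd (k + 4 + 2 * p) (by omega) c hX hi hstep
    hlast k hk (by omega) (by
      rcases Nat.even_or_odd k with h | ⟨a, ha⟩
      · exact Or.inl h
      · exact Or.inr ⟨a + 2 + p, by omega⟩)
  rwa [c0, c2] at this
end

section
/- Let G = (V,E) be a finite directed graph in which every vertex has at most 2 incoming edges and at most 2 outgoing edges, let s, t ∈ V be distinct, assume every edge leaving s and every edge entering t has its other endpoint in V⁻ := V − {s,t}, and enumerate V⁻ = {v₁,…,vₙ} with n ≥ 1. Let X and M be as defined in the construction below. Then for every z ∈ X, the number of elements w ∈ X with (z,w) ∈ M is at most 4, and the number of elements w ∈ X with (w,z) ∈ M is at most 4. -/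
theorem ap_four {α : Type*} (S : Set α) (a b c d : α)
    (h : ∀ x ∈ S, x = a ∨ x = b ∨ x = c ∨ x = d) : S.ncard ≤ 4 := by
  classical
  have h1 : S ⊆ (({a, b, c, d} : Finset α) : Set α) := by
    intro x hx
    simpa using h x hx
  have h2 := Set.ncard_le_ncard h1 (Finset.finite_toSet _)
  rw [Set.ncard_coe_finset] at h2
  exact h2.trans Finset.card_le_four

theorem ap_img {V α : Type*} [Finite V] (T : Set V) (hT : T.ncard ≤ 2) (f : V → α)
    (S : Set α) (a b : α)
    (h : ∀ x ∈ S, x = a ∨ x = b ∨ ∃ u ∈ T, x = f u) : S.ncard ≤ 4 := by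
  have h1 : S ⊆ f '' T ∪ {a, b} := by
    intro x hx
    rcases h x hx with h | h | ⟨u, hu, rfl⟩
    · simp [h]
    · simp [h]
    · exact Or.inl ⟨u, hu, rfl⟩
  have h2 := Set.ncard_le_ncard h1 (((Set.toFinite T).image f).union (Set.toFinite _))
  have h3 := Set.ncard_union_le (f '' T) {a, b}
  have h4 := Set.ncard_image_le (f := f) (Set.toFinite T)
  have h5 : ({a, b} : Set α).ncard ≤ 2 := by
    have := Set.ncard_insert_le a {b}
    rw [Set.ncard_singleton] at this
    exact this
  omega

theorem stmt_18 {V : Type*} [Fintype V] (E : V → V → Prop)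
    (hout : ∀ v : V, {u | E v u}.ncard ≤ 2) (hin : ∀ v : V, {u | E u v}.ncard ≤ 2)
    (s t : V) (hst : s ≠ t)
    (hs : ∀ u, E s u → u ≠ s ∧ u ≠ t) (ht : ∀ u, E u t → u ≠ s ∧ u ≠ t)
    (n : ℕ) (hn : 0 < n) (vmap : Fin n → V) (hinj : Function.Injective vmap)
    (hrange : Set.range vmap = {x | x ≠ s ∧ x ≠ t}) :
    ∀ z ∈ apX s t,
      {w | (z, w) ∈ apM E s t n hn vmap}.ncard ≤ 4 ∧
      {w | (w, z) ∈ apM E s t n hn vmap}.ncard ≤ 4 := by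
  classical
  have hnb : ∀ k : Fin n, ∃ p q : V, ∀ i j : Fin n, (j : ℕ) = (i : ℕ) + 1 →
      (vmap i = vmap k → vmap j = q) ∧ (vmap j = vmap k → vmap i = p) := by
    intro k
    refine ⟨vmap ⟨k - 1, by omega⟩,
      if h : (k : ℕ) + 1 < n then vmap ⟨k + 1, h⟩ else vmap k, ?_⟩
    intro i j hij
    constructor
    · intro h
      have := hinj h
      subst this
      have hj := j.2
      rw [dif_pos (by omega)]
      congr 1
      exact Fin.ext hij
    · intro h
      have := hinj h
      subst this
      congr 1
      apply Fin.ext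
      simp [hij]
  have hnb' : ∀ v, v ≠ s → v ≠ t → ∃ p q : V, ∀ i j : Fin n, (j : ℕ) = (i : ℕ) + 1 →
      (vmap i = v → vmap j = q) ∧ (vmap j = v → vmap i = p) := by
    intro v h1 h2
    have : v ∈ Set.range vmap := by rw [hrange]; exact ⟨h1, h2⟩
    obtain ⟨k, rfl⟩ := this
    exact hnb k
  rintro z ((rfl | rfl) | ⟨v, l, hvs, hvt, rfl⟩)
  · constructor
    · apply ap_img _ (hout s) (fun u => APElt.node u 0) _ APElt.src APElt.src
      intro x hx
      simp [apM] at hx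
      simp
      grind
    · apply ap_four _ APElt.src APElt.src (APElt.node (vmap ⟨0, hn⟩) 1)
        (APElt.node (vmap ⟨n - 1, by omega⟩) 1)
      intro x hx
      simp [apM] at hx
      grind
  · constructor
    · apply ap_four _ APElt.snk APElt.snk (APElt.node (vmap ⟨0, hn⟩) 2)
        (APElt.node (vmap ⟨n - 1, by omega⟩) 2)
      intro x hx
      simp [apM] at hx
      grind
    · apply ap_img _ (hin t) (fun u => APElt.node u 0) _ APElt.snk APElt.snk
      intro x hx
      simp [apM] at hx
      simp
      grind
  · obtain ⟨p, q, hpq⟩ := hnb' v hvs hvt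
    fin_cases l
    · constructor
      · apply ap_img _ (hout v) (fun u => if u = t then APElt.snk else APElt.node u 0) _
          (APElt.node v 0) (APElt.node v 1)
        intro x hx
        simp [apM] at hx
        simp
        grind
      · apply ap_img _ (hin v) (fun u => if u = s then APElt.src else APElt.node u 0) _
          (APElt.node v 0) (APElt.node v 2)
        intro x hx
        simp [apM] at hx
        simp
        grind
    · constructor
      · apply ap_four _ (APElt.node v 1) APElt.src (APElt.node p 1) (APElt.node q 1)
        intro x hx
        simp [apM] at hx
        grind
      · apply ap_four _ (APElt.node v 1) (APElt.node v 0) (APElt.node p 1) (APElt.node q 1)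
        intro x hx
        simp [apM] at hx
        grind
    · constructor
      · apply ap_four _ (APElt.node v 2) (APElt.node v 0) (APElt.node p 2) (APElt.node q 2)
        intro x hx
        simp [apM] at hx
        grind
      · apply ap_four _ (APElt.node v 2) APElt.snk (APElt.node p 2) (APElt.node q 2)
        intro x hx
        simp [apM] at hx
        grind
end
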